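/- arXiv:2201.00370 — 2 statements merged into one kernel-verified Lean document; each statement's English description precedes it below -/
import Mathlib

section
/- The gradient of the augmented Lagrangian with respect to v is Lipschitz continuous: with α ≥ 0 and μ ≥ 0, the function L_μ(v) is differentiable in v and for all v, v′ ∈ ℝ^N, ‖∇_v L_μ(v) − ∇_v L_μ(v′)‖ ≤ (α + μ + μ‖A‖²) · ‖v − v′‖, where ‖A‖ is the operator norm of A (so L = α + μ + μδ_A² is a valid Lipschitz constant for ∇_v L_μ; this is Lemma 3 of the paper). -/
open scoped RealInnerProductSpace

/-- The all-ones vector in `EuclideanSpace ℝ (Fin n)`. -/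
noncomputable def allOnes (n : ℕ) : EuclideanSpace ℝ (Fin n) :=
  (WithLp.equiv 2 _).symm fun _ => (1 : ℝ)

/-- **Lemma 3**: the augmented Lagrangian `L_μ` is differentiable in `v` and its gradient is
Lipschitz continuous with constant `α + μ + μ‖A‖²`, where `‖A‖` is the operator norm of
`A`. -/
theorem lemma3_lipschitz_gradient (M N : ℕ)
    (A : EuclideanSpace ℝ (Fin N) →L[ℝ] EuclideanSpace ℝ (Fin M))
    (lam : EuclideanSpace ℝ (Fin N)) (ϱ e₁ y₁ : EuclideanSpace ℝ (Fin M))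
    (e₂ y₂ : EuclideanSpace ℝ (Fin N)) (α μ : ℝ) (hα : 0 ≤ α) (hμ : 0 ≤ μ)
    (L : EuclideanSpace ℝ (Fin N) → ℝ)
    (hL : ∀ v, L v =
      ⟪lam, v⟫ - (α / 2) * ‖v - (1 / 2 : ℝ) • allOnes N‖ ^ 2
        + ⟪y₁, A v + e₁ - ϱ⟫ + ⟪y₂, v - e₂⟫
        + (μ / 2) * ‖A v + e₁ - ϱ‖ ^ 2 + (μ / 2) * ‖v - e₂‖ ^ 2) :
    (∀ v, DifferentiableAt ℝ L v) ∧
    ∀ v v', ‖gradient L v - gradient L v'‖ ≤ (α + μ + μ * ‖A‖ ^ 2) * ‖v - v'‖ := by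
  have key : ∀ v, HasGradientAt L (lam - α • (v - (1 / 2 : ℝ) • allOnes N)
      + A.adjoint y₁ + y₂ + μ • A.adjoint (A v + e₁ - ϱ) + μ • (v - e₂)) v := by
    intro v
    rw [hasGradientAt_iff_hasFDerivAt]
    have hid : HasFDerivAt (fun w : EuclideanSpace ℝ (Fin N) => w)
      (ContinuousLinearMap.id ℝ (EuclideanSpace ℝ (Fin N))) v := hasFDerivAt_id v
    have hA : HasFDerivAt (fun w => A w + e₁ - ϱ) A v :=
      (A.hasFDerivAt.add_const e₁).sub_const ϱ
    have h1 := (hasFDerivAt_const lam v).inner ℝ hid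
    have h2 := ((hid.sub_const ((1 / 2 : ℝ) • allOnes N)).norm_sq).const_mul (α / 2)
    have h3 := (hasFDerivAt_const y₁ v).inner ℝ hA
    have h4 := (hasFDerivAt_const y₂ v).inner ℝ (hid.sub_const e₂)
    have h5 := (hA.norm_sq).const_mul (μ / 2)
    have h6 := ((hid.sub_const e₂).norm_sq).const_mul (μ / 2)
    have h := ((((h1.sub h2).add h3).add h4).add h5).add h6
    have hLe : L = _ := funext hL
    rw [hLe]
    refine h.congr_fderiv ?_
    ext w
    simp [inner_add_left, inner_sub_left, inner_smul_left, ContinuousLinearMap.adjoint_inner_left]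
    ring
  refine ⟨fun v => (key v).differentiableAt, fun v v' => ?_⟩
  rw [(key v).gradient, (key v').gradient]
  have e : (lam - α • (v - (1 / 2 : ℝ) • allOnes N)
      + A.adjoint y₁ + y₂ + μ • A.adjoint (A v + e₁ - ϱ) + μ • (v - e₂))
      - (lam - α • (v' - (1 / 2 : ℝ) • allOnes N)
      + A.adjoint y₁ + y₂ + μ • A.adjoint (A v' + e₁ - ϱ) + μ • (v' - e₂))
      = -(α • (v - v')) + μ • (v - v') + μ • A.adjoint (A (v - v')) := by
    simp only [map_add, map_sub]
    module
  rw [e]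
  have hAA : ‖A.adjoint (A (v - v'))‖ ≤ ‖A‖ ^ 2 * ‖v - v'‖ := by
    calc ‖A.adjoint (A (v - v'))‖ ≤ ‖A.adjoint‖ * ‖A (v - v')‖ := A.adjoint.le_opNorm _
      _ = ‖A‖ * ‖A (v - v')‖ := by rw [LinearIsometryEquiv.norm_map]
      _ ≤ ‖A‖ * (‖A‖ * ‖v - v'‖) := by gcongr; exact A.le_opNorm _
      _ = _ := by ring
  calc _ ≤ ‖-(α • (v - v'))‖ + ‖μ • (v - v')‖ + ‖μ • A.adjoint (A (v - v'))‖ := norm_add₃_le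
    _ = α * ‖v - v'‖ + μ * ‖v - v'‖ + μ * ‖A.adjoint (A (v - v'))‖ := by
      rw [norm_neg, norm_smul, norm_smul, norm_smul, Real.norm_of_nonneg hα,
        Real.norm_of_nonneg hμ]
    _ ≤ α * ‖v - v'‖ + μ * ‖v - v'‖ + μ * (‖A‖ ^ 2 * ‖v - v'‖) := by gcongr
    _ = _ := by ring
end

section
/- Fix additionally p ∈ ℝ^N and ρ ∈ ℝ, and assume μ > 0, α ≥ 0 and ρ + μ > α. Set ε = 1 + ρ/μ − α/μ and φ = Aᵀ·(ϱ − e₁ − (1/μ)y₁) + (e₂ − (1/μ)y₂) + (ρ/μ)p − (1/μ)(λ + (α/2)𝟙). Then the matrix AᵀA + εI is positive definite (hence invertible), the function F(v) = L_μ(v) + (ρ/2)‖v − p‖² has a unique global minimizer v* over ℝ^N, and v* is the unique solution of the linear system (AᵀA + εI)·v = φ; equivalently v* = (AᵀA + εI)⁻¹·φ (the closed-form v-update (34)–(35) of the proximal-ADMM decoder). -/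
open Matrix

/-- The closed-form `v`-update (34)–(35) of the proximal-ADMM decoder: with
`ε = 1 + ρ/μ − α/μ` and
`φ = Aᵀ(ϱ − e₁ − y₁/μ) + (e₂ − y₂/μ) + (ρ/μ)p − (1/μ)(λ + (α/2)𝟙)`,
the matrix `AᵀA + εI` is positive definite (hence invertible), the proximal objective
`F(v) = L_μ(v) + (ρ/2)‖v − p‖²` has a unique global minimizer `v*`, and `v*` is
characterized as the unique solution of `(AᵀA + εI)v = φ`, i.e. `v* = (AᵀA + εI)⁻¹φ`. -/
theorem v_update_closed_form (M N : ℕ) (A : Matrix (Fin M) (Fin N) ℝ)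
    (lam : Fin N → ℝ) (ϱ e₁ y₁ : Fin M → ℝ) (e₂ y₂ : Fin N → ℝ)
    (p : Fin N → ℝ) (α μ ρ ε : ℝ) (hμ : 0 < μ) (hα : 0 ≤ α) (hρμα : α < ρ + μ)
    (hε : ε = 1 + ρ / μ - α / μ)
    (L F : (Fin N → ℝ) → ℝ)
    (hL : ∀ v, L v =
      (∑ i, lam i * v i) - (α / 2) * ∑ i, (v i - 1 / 2) ^ 2
        + (∑ j, y₁ j * (A.mulVec v j + e₁ j - ϱ j)) + (∑ i, y₂ i * (v i - e₂ i))
        + (μ / 2) * (∑ j, (A.mulVec v j + e₁ j - ϱ j) ^ 2)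
        + (μ / 2) * ∑ i, (v i - e₂ i) ^ 2)
    (hF : ∀ v, F v = L v + (ρ / 2) * ∑ i, (v i - p i) ^ 2)
    (φ : Fin N → ℝ)
    (hφ : φ = Aᵀ.mulVec (fun j => ϱ j - e₁ j - y₁ j / μ)
        + (fun i => e₂ i - y₂ i / μ) + (ρ / μ) • p
        - (1 / μ) • fun i => lam i + α / 2) :
    (Aᵀ * A + ε • (1 : Matrix (Fin N) (Fin N) ℝ)).PosDef ∧
    IsUnit (Aᵀ * A + ε • (1 : Matrix (Fin N) (Fin N) ℝ)) ∧
    (∃! v : Fin N → ℝ, ∀ w, F v ≤ F w) ∧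
    (∀ v : Fin N → ℝ, (∀ w, F v ≤ F w) ↔
      (Aᵀ * A + ε • (1 : Matrix (Fin N) (Fin N) ℝ)).mulVec v = φ) ∧
    (∀ v : Fin N → ℝ, (∀ w, F v ≤ F w) ↔
      v = (Aᵀ * A + ε • (1 : Matrix (Fin N) (Fin N) ℝ))⁻¹.mulVec φ) := by
  have hεpos : 0 < ε := by
    have h : ε = (ρ + μ - α) / μ := by rw [hε]; field_simp; ring
    rw [h]; exact div_pos (by linarith) hμ
  have hεμ : μ * ε = μ + ρ - α := by rw [hε]; field_simp
  set B := Aᵀ * A + ε • (1 : Matrix (Fin N) (Fin N) ℝ) with hB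
  have hPD : B.PosDef := by
    have h1 : (Aᵀ * A).PosSemidef := by
      simpa using Matrix.posSemidef_conjTranspose_mul_self A
    exact Matrix.PosDef.posSemidef_add h1 (Matrix.PosDef.one.smul hεpos)
  have hU : IsUnit B := hPD.isUnit
  have hdet : IsUnit B.det := (Matrix.isUnit_iff_isUnit_det B).1 hU
  have hBd : ∀ d v : Fin N → ℝ, d ⬝ᵥ (B *ᵥ v) =
      (∑ j, (A *ᵥ d) j * (A *ᵥ v) j) + ∑ i, ε * (d i * v i) := by
    intro d v
    have h1 : d ⬝ᵥ ((Aᵀ * A) *ᵥ v) = (A *ᵥ d) ⬝ᵥ (A *ᵥ v) := by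
      rw [← Matrix.mulVec_mulVec, Matrix.dotProduct_mulVec, Matrix.vecMul_transpose]
    rw [hB, Matrix.add_mulVec, dotProduct_add, h1, Matrix.smul_mulVec, Matrix.one_mulVec,
      dotProduct_smul, smul_eq_mul, dotProduct, dotProduct, Finset.mul_sum]
  have hφd : ∀ d : Fin N → ℝ, d ⬝ᵥ φ =
      (∑ j, (A *ᵥ d) j * (ϱ j - e₁ j - y₁ j / μ)) +
      ∑ i, d i * ((e₂ i - y₂ i / μ) + ρ / μ * p i - 1 / μ * (lam i + α / 2)) := by
    intro d
    have h1 : φ = Aᵀ *ᵥ (fun j => ϱ j - e₁ j - y₁ j / μ) +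
        fun i => ((e₂ i - y₂ i / μ) + ρ / μ * p i - 1 / μ * (lam i + α / 2)) := by
      rw [hφ]; ext i; simp only [Pi.add_apply, Pi.sub_apply, Pi.smul_apply, smul_eq_mul]; ring
    rw [h1, dotProduct_add, Matrix.dotProduct_mulVec, Matrix.vecMul_transpose]
    rfl
  have key : ∀ v d : Fin N → ℝ, F (v + d) = F v + μ * (d ⬝ᵥ (B *ᵥ v) - d ⬝ᵥ φ)
      + μ / 2 * (d ⬝ᵥ (B *ᵥ d)) := by
    intro v d
    have hM : (∑ j, y₁ j * ((A *ᵥ (v + d)) j + e₁ j - ϱ j))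
        + μ / 2 * (∑ j, ((A *ᵥ (v + d)) j + e₁ j - ϱ j) ^ 2)
        = (∑ j, y₁ j * ((A *ᵥ v) j + e₁ j - ϱ j))
        + μ / 2 * (∑ j, ((A *ᵥ v) j + e₁ j - ϱ j) ^ 2)
        + μ * ((∑ j, (A *ᵥ d) j * (A *ᵥ v) j)
          - (∑ j, (A *ᵥ d) j * (ϱ j - e₁ j - y₁ j / μ)))
        + μ / 2 * (∑ j, (A *ᵥ d) j * (A *ᵥ d) j) := by
      simp only [Finset.mul_sum, ← Finset.sum_add_distrib, ← Finset.sum_sub_distrib]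
      refine Finset.sum_congr rfl fun j _ => ?_
      rw [Matrix.mulVec_add, Pi.add_apply]
      field_simp
      ring
    have hN : (∑ i, lam i * (v + d) i) - (α / 2) * (∑ i, ((v + d) i - 1 / 2) ^ 2)
        + (∑ i, y₂ i * ((v + d) i - e₂ i)) + (μ / 2) * (∑ i, ((v + d) i - e₂ i) ^ 2)
        + (ρ / 2) * (∑ i, ((v + d) i - p i) ^ 2)
        = (∑ i, lam i * v i) - (α / 2) * (∑ i, (v i - 1 / 2) ^ 2)
        + (∑ i, y₂ i * (v i - e₂ i)) + (μ / 2) * (∑ i, (v i - e₂ i) ^ 2)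
        + (ρ / 2) * (∑ i, (v i - p i) ^ 2)
        + μ * ((∑ i, ε * (d i * v i))
          - ∑ i, d i * ((e₂ i - y₂ i / μ) + ρ / μ * p i - 1 / μ * (lam i + α / 2)))
        + μ / 2 * (∑ i, ε * (d i * d i)) := by
      simp only [Finset.mul_sum, ← Finset.sum_add_distrib, ← Finset.sum_sub_distrib]
      refine Finset.sum_congr rfl fun i _ => ?_
      rw [Pi.add_apply, hε]
      field_simp
      ring
    rw [hF, hF, hL, hL, hBd, hBd, hφd]
    linear_combination hM + hN
  have hpos : ∀ d : Fin N → ℝ, d ≠ 0 → 0 < d ⬝ᵥ (B *ᵥ d) := by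
    intro d hd
    simpa using hPD.dotProduct_mulVec_pos hd
  have hsol : B *ᵥ (B⁻¹ *ᵥ φ) = φ := by
    rw [Matrix.mulVec_mulVec, Matrix.mul_nonsing_inv _ hdet, Matrix.one_mulVec]
  have hlin : ∀ v : Fin N → ℝ, B *ᵥ v = φ ↔ v = B⁻¹ *ᵥ φ := by
    intro v
    constructor
    · intro h
      rw [← h, Matrix.mulVec_mulVec, Matrix.nonsing_inv_mul _ hdet, Matrix.one_mulVec]
    · rintro rfl; exact hsol
  have hval : ∀ w, F w = F (B⁻¹ *ᵥ φ)
      + μ / 2 * ((w - B⁻¹ *ᵥ φ) ⬝ᵥ (B *ᵥ (w - B⁻¹ *ᵥ φ))) := by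
    intro w
    have h := key (B⁻¹ *ᵥ φ) (w - B⁻¹ *ᵥ φ)
    rw [hsol, sub_self, mul_zero, add_zero, add_sub_cancel] at h
    exact h
  have hmin : ∀ v : Fin N → ℝ, (∀ w, F v ≤ F w) ↔ v = B⁻¹ *ᵥ φ := by
    intro v
    constructor
    · intro h
      by_contra hne
      have h1 := h (B⁻¹ *ᵥ φ)
      have h2 := mul_pos (half_pos hμ) (hpos _ (sub_ne_zero.2 hne))
      have h3 := hval v
      linarith
    · rintro rfl w
      rw [hval w]
      by_cases hw : w - B⁻¹ *ᵥ φ = 0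
      · simp [hw]
      · have h2 := mul_pos (half_pos hμ) (hpos _ hw)
        linarith
  exact ⟨hPD, hU, ⟨_, (hmin _).2 rfl, fun y hy => (hmin y).1 hy⟩,
    fun v => (hmin v).trans (hlin v).symm, hmin⟩
end
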